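/- Let f : ℝ^d → ℝ be twice differentiable at x ∈ ℝ^d, let S ∈ ℝ^{l×d} and ŝ ∈ ℝ^l with Sᵀŝ ≠ 0, and let α > 0, θ ∈ (0,1), κ_S ≥ 0, S_max > 0, ε_H > 0. Assume: (a) ‖S‖ ≤ S_max; (b) λ_min( S∇²f(x)Sᵀ ) < −ε_H; (c) m̂(ŝ) ≤ f(x); (d) for every y ∈ ℝ^l, ⟨y, S∇²f(x)Sᵀ y⟩ + (1/α)·[ ‖Sᵀŝ‖^{-1}·⟨S Sᵀŝ, y⟩² + ‖Sᵀŝ‖·‖Sᵀy‖² ] ≥ −κ_S·‖Sᵀŝ‖·‖y‖²; (e) f(x) − f(x + Sᵀŝ) ≥ θ·( q̂(0) − q̂(ŝ) ). Then f(x) − f(x + Sᵀŝ) ≥ ( θ·ε_H³ / (3α) )·( 2·S_max²/α + κ_S )^{-3}. -/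

import Mathlib

open scoped BigOperators NNReal
open MeasureTheory ProbabilityTheory

namespace RARC

noncomputable def enorm {n : ℕ} (v : Fin n → ℝ) : ℝ := Real.sqrt (∑ i, v i ^ 2)

noncomputable def opNorm {m n : ℕ} (S : Matrix (Fin m) (Fin n) ℝ) : ℝ :=
  sSup {c : ℝ | ∃ v : Fin n → ℝ, enorm v = 1 ∧ c = enorm (S.mulVec v)}

noncomputable def grad {n : ℕ} (f : (Fin n → ℝ) → ℝ) (x : Fin n → ℝ) : Fin n → ℝ :=
  fun i => fderiv ℝ f x (Pi.single i 1)

noncomputable def hess {n : ℕ} (f : (Fin n → ℝ) → ℝ) (x : Fin n → ℝ) :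
    Matrix (Fin n) (Fin n) ℝ :=
  Matrix.of fun i j =>
    fderiv ℝ (fun y => fderiv ℝ f y (Pi.single j 1)) x (Pi.single i 1)

noncomputable def qhat {d l : ℕ} (f : (Fin d → ℝ) → ℝ) (x : Fin d → ℝ)
    (S : Matrix (Fin l) (Fin d) ℝ) (s : Fin l → ℝ) : ℝ :=
  f x + (∑ i, S.mulVec (grad f x) i * s i)
    + (1/2) * (∑ i, s i * (S * hess f x * S.transpose).mulVec s i)

noncomputable def mhat {d l : ℕ} (f : (Fin d → ℝ) → ℝ) (x : Fin d → ℝ)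
    (S : Matrix (Fin l) (Fin d) ℝ) (α : ℝ) (s : Fin l → ℝ) : ℝ :=
  qhat f x S s + (1/(3*α)) * enorm (S.transpose.mulVec s) ^ 3

noncomputable def lambdaMin {n : ℕ} (A : Matrix (Fin n) (Fin n) ℝ) : ℝ :=
  sInf {t : ℝ | ∃ v : Fin n → ℝ, enorm v = 1 ∧ t = ∑ i, v i * A.mulVec v i}

def LipschitzHessian {n : ℕ} (f : (Fin n → ℝ) → ℝ) (L : ℝ) : Prop :=
  ∀ x y : Fin n → ℝ, opNorm (hess f y - hess f x) ≤ L * enorm (y - x)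

noncomputable def augM {d : ℕ} (f : (Fin d → ℝ) → ℝ) (x : Fin d → ℝ) :
    Matrix (Fin d) (Fin (d+1)) ℝ :=
  Matrix.of fun i j => Fin.cases (grad f x i) (fun j' => hess f x i j') j

noncomputable def gaussVec (l : ℕ) : Measure (Fin l → ℝ) :=
  Measure.pi fun _ => gaussianReal 0 (l : ℝ≥0)⁻¹

noncomputable def scaledGaussian (l d : ℕ) : Measure (Fin l → Fin d → ℝ) :=
  Measure.pi fun _ : Fin l => Measure.pi fun _ : Fin d => gaussianReal 0 (l : ℝ≥0)⁻¹

/-!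
Along a unit vector `v` on which the reduced Hessian is smaller than `-ε_H`, the second-order
condition on the cubic model can only hold if the curvature of its cubic term compensates for the
missing positivity. That curvature is at most `2 * ‖Sᵀŝ‖ * ‖S‖² / α`, so the step cannot be short:
`ε_H < (2 * S_max² / α + κ_S) * ‖Sᵀŝ‖`. Since the cubic model does not increase along the step, the
quadratic model decreases by at least `‖Sᵀŝ‖³ / (3 * α)`, and a fraction `θ` of this is inherited
by the objective.
-/

section EuclideanNorm

variable {m n : ℕ}

theorem enorm_nonneg (v : Fin n → ℝ) : 0 ≤ enorm v :=
  Real.sqrt_nonneg _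

theorem enorm_eq_norm_toLp (v : Fin n → ℝ) : enorm v = ‖WithLp.toLp 2 v‖ := by
  simp [enorm, EuclideanSpace.norm_eq]

theorem sq_dotProduct_le_sq_enorm_mul_sq_enorm (v w : Fin n → ℝ) :
    (v ⬝ᵥ w) ^ 2 ≤ enorm v ^ 2 * enorm w ^ 2 := by
  simp only [enorm, Real.sq_sqrt (Finset.sum_nonneg fun _ _ ↦ sq_nonneg _)]
  exact Finset.sum_mul_sq_le_sq_mul_sq _ _ _

open scoped Matrix.Norms.L2Operator in
theorem opNorm_eq_l2_opNorm (S : Matrix (Fin m) (Fin n) ℝ) : opNorm S = ‖S‖ := by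
  rw [Matrix.l2_opNorm_def, ← ContinuousLinearMap.sSup_sphere_eq_norm, opNorm]
  congr 1
  ext c
  constructor
  · rintro ⟨v, hv, rfl⟩
    refine ⟨WithLp.toLp 2 v, ?_, ?_⟩
    · simpa [enorm_eq_norm_toLp] using hv
    · exact (enorm_eq_norm_toLp _).symm
  · rintro ⟨v, hv, rfl⟩
    refine ⟨v.ofLp, ?_, ?_⟩
    · simpa [enorm_eq_norm_toLp] using hv
    · exact (enorm_eq_norm_toLp _).symm

open scoped Matrix.Norms.L2Operator in
theorem opNorm_nonneg (S : Matrix (Fin m) (Fin n) ℝ) : 0 ≤ opNorm S := by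
  rw [opNorm_eq_l2_opNorm]
  exact norm_nonneg S

theorem opNorm_transpose (S : Matrix (Fin m) (Fin n) ℝ) : opNorm S.transpose = opNorm S := by
  rw [opNorm_eq_l2_opNorm, opNorm_eq_l2_opNorm, ← Matrix.conjTranspose_eq_transpose_of_trivial,
    Matrix.l2_opNorm_conjTranspose]

theorem enorm_mulVec_le (S : Matrix (Fin m) (Fin n) ℝ) (v : Fin n → ℝ) :
    enorm (S.mulVec v) ≤ opNorm S * enorm v := by
  rw [enorm_eq_norm_toLp, enorm_eq_norm_toLp, opNorm_eq_l2_opNorm]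
  exact S.l2_opNorm_mulVec (WithLp.toLp 2 v)

theorem exists_dotProduct_mulVec_lt_of_lambdaMin_lt {A : Matrix (Fin n) (Fin n) ℝ} {c : ℝ}
    (hc : c ≤ 0) (h : lambdaMin A < c) :
    ∃ v : Fin n → ℝ, enorm v = 1 ∧ v ⬝ᵥ A.mulVec v < c := by
  -- For `n = 0` there is no unit vector, and `lambdaMin A` takes the value `sInf ∅ = 0`.
  have nonempty : {t : ℝ | ∃ v : Fin n → ℝ, enorm v = 1 ∧ t = v ⬝ᵥ A.mulVec v}.Nonempty := by
    rw [Set.nonempty_iff_ne_empty]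
    intro empty
    have : lambdaMin A = 0 := (congrArg sInf empty).trans Real.sInf_empty
    linarith
  obtain ⟨_, ⟨v, hv, rfl⟩, hlt⟩ := exists_lt_of_csInf_lt nonempty h
  exact ⟨v, hv, hlt⟩

end EuclideanNorm

section CubicModel

variable {d l : ℕ}

/-- The quadratic model with value `c`, gradient `g` and (possibly inexact) Hessian `B` at the
origin; `qhat` is the case where these come from the objective. -/
noncomputable def quadModel (c : ℝ) (g : Fin l → ℝ) (B : Matrix (Fin l) (Fin l) ℝ)
    (s : Fin l → ℝ) : ℝ :=
  c + g ⬝ᵥ s + (1 / 2) * (s ⬝ᵥ B.mulVec s)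

/-- The cubically regularized model with weight `1 / α`; the regularizer measures the
full-space step `Sᵀs`, as in `mhat`. -/
noncomputable def cubicModel (c : ℝ) (g : Fin l → ℝ) (B : Matrix (Fin l) (Fin l) ℝ)
    (S : Matrix (Fin l) (Fin d) ℝ) (α : ℝ) (s : Fin l → ℝ) : ℝ :=
  quadModel c g B s + (1 / (3 * α)) * enorm (S.transpose.mulVec s) ^ 3

/-- The second derivative of `s ↦ ‖Sᵀs‖³ / 3` at `s`, as a quadratic form in `y`. Where `Sᵀs = 0`
this derivative vanishes, in agreement with the value given by `0⁻¹ = 0`. -/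
noncomputable def cubicCurvature (S : Matrix (Fin l) (Fin d) ℝ) (s y : Fin l → ℝ) : ℝ :=
  (enorm (S.transpose.mulVec s))⁻¹ * ((S * S.transpose).mulVec s ⬝ᵥ y) ^ 2
    + enorm (S.transpose.mulVec s) * enorm (S.transpose.mulVec y) ^ 2

theorem mul_transpose_mulVec_dotProduct (S : Matrix (Fin l) (Fin d) ℝ) (s y : Fin l → ℝ) :
    (S * S.transpose).mulVec s ⬝ᵥ y = S.transpose.mulVec s ⬝ᵥ S.transpose.mulVec y := by
  rw [← Matrix.mulVec_mulVec, Matrix.dotProduct_mulVec, Matrix.vecMul_transpose]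

theorem cubicCurvature_le (S : Matrix (Fin l) (Fin d) ℝ) (s y : Fin l → ℝ) :
    cubicCurvature S s y ≤ 2 * opNorm S ^ 2 * enorm (S.transpose.mulVec s) * enorm y ^ 2 := by
  set t := enorm (S.transpose.mulVec s)
  set r := enorm (S.transpose.mulVec y)
  have ht_nonneg : 0 ≤ t := enorm_nonneg _
  have cauchy_schwarz : ((S * S.transpose).mulVec s ⬝ᵥ y) ^ 2 ≤ t ^ 2 * r ^ 2 := by
    rw [mul_transpose_mulVec_dotProduct]
    exact sq_dotProduct_le_sq_enorm_mul_sq_enorm _ _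
  have hr_le : r ≤ opNorm S * enorm y := by
    simpa only [opNorm_transpose] using enorm_mulVec_le S.transpose y
  calc cubicCurvature S s y
      = t⁻¹ * ((S * S.transpose).mulVec s ⬝ᵥ y) ^ 2 + t * r ^ 2 := rfl
    _ ≤ t⁻¹ * (t ^ 2 * r ^ 2) + t * r ^ 2 := by gcongr
    _ = 2 * t * r ^ 2 := by
      rw [← mul_assoc, sq t, ← mul_assoc, inv_mul_mul_self]
      ring
    _ ≤ 2 * t * (opNorm S * enorm y) ^ 2 := by
      gcongr
      exact enorm_nonneg _
    _ = 2 * opNorm S ^ 2 * t * enorm y ^ 2 := by ring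

theorem lt_mul_enorm_of_lambdaMin_lt {B : Matrix (Fin l) (Fin l) ℝ}
    {S : Matrix (Fin l) (Fin d) ℝ} {s : Fin l → ℝ} {α κ ε : ℝ} (hα : 0 < α) (hε : 0 ≤ ε)
    (hB : lambdaMin B < -ε)
    (hcurv : ∀ y : Fin l → ℝ, -κ * enorm (S.transpose.mulVec s) * enorm y ^ 2
      ≤ y ⬝ᵥ B.mulVec y + (1 / α) * cubicCurvature S s y) :
    ε < (2 * opNorm S ^ 2 / α + κ) * enorm (S.transpose.mulVec s) := by
  obtain ⟨v, hv, hBv⟩ := exists_dotProduct_mulVec_lt_of_lambdaMin_lt (neg_nonpos.mpr hε) hB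
  have hcurv_v := hcurv v
  have hcubic : (1 / α) * cubicCurvature S s v
      ≤ (1 / α) * (2 * opNorm S ^ 2 * enorm (S.transpose.mulVec s) * enorm v ^ 2) := by
    gcongr
    exact cubicCurvature_le S s v
  rw [hv] at hcurv_v hcubic
  linear_combination hBv + hcurv_v + hcubic

theorem enorm_pow_three_le_quadModel_sub {c : ℝ} {g : Fin l → ℝ}
    {B : Matrix (Fin l) (Fin l) ℝ} {S : Matrix (Fin l) (Fin d) ℝ} {α : ℝ} {s : Fin l → ℝ}
    (h : cubicModel c g B S α s ≤ c) :
    (1 / (3 * α)) * enorm (S.transpose.mulVec s) ^ 3 ≤ quadModel c g B 0 - quadModel c g B s := by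
  have quadModel_zero : quadModel c g B 0 = c := by simp [quadModel]
  rw [cubicModel] at h
  linarith

theorem stmt16_general (f : (Fin d → ℝ) → ℝ) (x : Fin d → ℝ) (g : Fin l → ℝ)
    (B : Matrix (Fin l) (Fin l) ℝ) (S : Matrix (Fin l) (Fin d) ℝ) (sh : Fin l → ℝ)
    {α θ κ_S S_max ε_H : ℝ} (hα : 0 < α) (hθ : 0 ≤ θ) (hεH : 0 < ε_H)
    (ha : opNorm S ≤ S_max)
    (hb : lambdaMin B < -ε_H)
    (hc : cubicModel (f x) g B S α sh ≤ f x)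
    (hd : ∀ y : Fin l → ℝ, -κ_S * enorm (S.transpose.mulVec sh) * enorm y ^ 2
      ≤ y ⬝ᵥ B.mulVec y + (1 / α) * cubicCurvature S sh y)
    (he : θ * (quadModel (f x) g B 0 - quadModel (f x) g B sh)
      ≤ f x - f (x + S.transpose.mulVec sh)) :
    (θ * ε_H ^ 3 / (3 * α)) * ((2 * S_max ^ 2 / α + κ_S) ^ 3)⁻¹
      ≤ f x - f (x + S.transpose.mulVec sh) := by
  have step_long : ε_H < (2 * S_max ^ 2 / α + κ_S) * enorm (S.transpose.mulVec sh) := by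
    refine (lt_mul_enorm_of_lambdaMin_lt hα hεH.le hb hd).trans_le ?_
    have := opNorm_nonneg S
    have := enorm_nonneg (S.transpose.mulVec sh)
    gcongr
  set t := enorm (S.transpose.mulVec sh)
  set K := 2 * S_max ^ 2 / α + κ_S
  have ht : 0 ≤ t := enorm_nonneg _
  have hK : 0 < K := pos_of_mul_pos_left (hεH.trans step_long) ht
  calc (θ * ε_H ^ 3 / (3 * α)) * (K ^ 3)⁻¹
      ≤ (θ * (K * t) ^ 3 / (3 * α)) * (K ^ 3)⁻¹ := by gcongr
    _ = θ * ((1 / (3 * α)) * t ^ 3) := by field_simp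
    _ ≤ θ * (quadModel (f x) g B 0 - quadModel (f x) g B sh) := by
      gcongr
      exact enorm_pow_three_le_quadModel_sub hc
    _ ≤ f x - f (x + S.transpose.mulVec sh) := he

end CubicModel

theorem stmt16 {d l : ℕ} (f : (Fin d → ℝ) → ℝ) (x : Fin d → ℝ)
    (hf1 : DifferentiableAt ℝ f x) (hf2 : DifferentiableAt ℝ (fderiv ℝ f) x)
    (S : Matrix (Fin l) (Fin d) ℝ) (sh : Fin l → ℝ)
    (hs : S.transpose.mulVec sh ≠ 0)
    (α θ κ_S S_max ε_H : ℝ) (hα : 0 < α) (hθ : θ ∈ Set.Ioo (0:ℝ) 1)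
    (hκ : 0 ≤ κ_S) (hSmax : 0 < S_max) (hεH : 0 < ε_H)
    (ha : opNorm S ≤ S_max)
    (hb : lambdaMin (S * hess f x * S.transpose) < -ε_H)
    (hc : mhat f x S α sh ≤ f x)
    (hd : ∀ y : Fin l → ℝ,
      (∑ i, y i * (S * hess f x * S.transpose).mulVec y i)
        + (1/α) * ((enorm (S.transpose.mulVec sh))⁻¹
              * (∑ i, (S * S.transpose).mulVec sh i * y i) ^ 2
            + enorm (S.transpose.mulVec sh) * enorm (S.transpose.mulVec y) ^ 2)
        ≥ -κ_S * enorm (S.transpose.mulVec sh) * enorm y ^ 2)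
    (he : f x - f (x + S.transpose.mulVec sh) ≥ θ * (qhat f x S 0 - qhat f x S sh)) :
    f x - f (x + S.transpose.mulVec sh)
      ≥ (θ * ε_H ^ 3 / (3 * α)) * ((2 * S_max ^ 2 / α + κ_S) ^ 3)⁻¹ :=
  stmt16_general f x (S.mulVec (grad f x)) (S * hess f x * S.transpose) S sh hα hθ.1.le hεH
    ha hb hc hd he

end RARC
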